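/- arXiv:1109.3851 — 3 statements merged into one kernel-verified Lean document; each statement's English description precedes it below -/
import Mathlib

section
/- Let A ≅ Mat_n(Δ) be a finite-dimensional central simple algebra over a field F, where Δ is a central division F-algebra of degree d, and let f(t) = ∏_{i=1}^s p_i(t)^{a_i} ∈ F[t] be a monic polynomial of degree nd with the p_i distinct monic irreducible polynomials. Then f(t) is a characteristic polynomial of A if and only if for every i = 1,…,s there is a positive integer n_i with a_i · deg p_i(t) = n_i · d and the polynomial p_i(t)^{a_i} is a characteristic polynomial of Mat_{n_i}(Δ). -/
/-!
Let a matrix `x ∈ Mat_n(Δ)` act on row vectors `Δⁿ` from the right. This is a left `Δ`-linear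
endomorphism, every `Δ`-endomorphism of `Δⁿ` is of this form, and its characteristic polynomial
over `F` (on a space of `F`-dimension `n d²`) is the `d`-th power of the reduced one: a polynomial
`f` is a characteristic polynomial of `x` iff `f` is monic and `charpoly_F(x | Δⁿ) = f ^ d`
(`isCharPoly_iff_of_split`). To see this, compute the characteristic polynomial of right
multiplication by `x` on `Mat_n(Δ)` in two ways. Row by row it is `charpoly_F(x | Δⁿ) ^ n`, and after
splitting the algebra over the algebraic closure it is `f_x ^ (n d)`; monic polynomials over a field
have unique roots of a given order. In particular no Skolem–Noether theorem is needed.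

The statement thus becomes one about pairs `(V, T)`, with `V` a finite-dimensional left `Δ`-space
and `T` a `Δ`-endomorphism.

* If `charpoly_F T = (∏ pⱼ ^ aⱼ) ^ d`, then, since `F` acts centrally, the primary component
  `W = ker (pᵢ ^ (aᵢ d))(T)` is a `Δ`-subspace. It has a `T`-stable complement, and coprimality forces
  `charpoly_F (T | W) = pᵢ ^ (aᵢ d)` (`exists_primary_summand`). Comparing `F`-dimensions gives
  `aᵢ deg pᵢ = d · dim_Δ W`, so `nᵢ = dim_Δ W`.
* Conversely, the direct sum of the given endomorphisms of `Δ^{nᵢ}` has characteristic polynomial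
  `f ^ d`, and `∑ nᵢ = n` by comparing degrees.

Splitting fields enter only through the existence of an isomorphism of the scalar extension of
`Mat_k(Δ)` with a matrix algebra. Such an isomorphism is given for one size `k > 0`, and it
propagates to all sizes because each is equivalent to the simplicity of `F̄ ⊗ Δ`
(`exists_splitting_of_splitting`).
-/

open Polynomial TensorProduct

/-- `f` is the characteristic polynomial of the element `x` of the finite-dimensional
central simple `F`-algebra `A`. -/
def IsCharPoly (F : Type) [Field F] {A : Type} [Ring A] [Algebra F A]
    (x : A) (f : Polynomial F) : Prop :=
  ∃ (m : ℕ)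
    (e : (AlgebraicClosure F ⊗[F] A) ≃ₐ[AlgebraicClosure F]
          Matrix (Fin m) (Fin m) (AlgebraicClosure F)),
    f.map (algebraMap F (AlgebraicClosure F)) =
      Matrix.charpoly (e ((1 : AlgebraicClosure F) ⊗ₜ[F] x))

/-- The characteristic polynomial of a diagonal endomorphism of a finite product. -/
theorem charpoly_pi_map {K : Type*} [Field K] (k : ℕ) (M : Fin k → Type*)
    [∀ i, AddCommGroup (M i)] [∀ i, Module K (M i)] [∀ i, Module.Finite K (M i)]
    (T : ∀ i, M i →ₗ[K] M i) :
    (LinearMap.pi fun i => T i ∘ₗ LinearMap.proj i : (∀ i, M i) →ₗ[K] ∀ i, M i).charpoly =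
      ∏ i, (T i).charpoly := by
  induction k with
  | zero =>
    rw [Fin.prod_univ_zero]
    exact (LinearMap.charpoly_monic _).natDegree_eq_zero.1 (by
      rw [LinearMap.charpoly_natDegree]
      exact Module.finrank_zero_of_subsingleton)
  | succ k ih =>
    rw [Fin.prod_univ_succ, ← ih, ← LinearMap.charpoly_prodMap,
      ← LinearEquiv.charpoly_conj (Fin.consLinearEquiv K M)]
    congr 1
    refine LinearMap.ext fun v => funext fun i => ?_
    refine Fin.cases ?_ (fun j => ?_) i <;> simp [LinearEquiv.conj_apply, Fin.tail]

/-- Right multiplication `v ↦ v ᵥ* x` on row vectors, as a `K`-linear endomorphism of `Dⁿ`. Acting on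
the right makes this map left `D`-linear even when `D` is not commutative. -/
def rowMap (K : Type*) {D : Type*} [CommRing K] [Ring D] [Algebra K D] {n : ℕ}
    (x : Matrix (Fin n) (Fin n) D) : (Fin n → D) →ₗ[K] (Fin n → D) :=
  (Matrix.toLinearMapRight' x).restrictScalars K

/-- `Mat_n(D)` with right multiplication by `x` is the sum of `n` copies (the rows) of `Dⁿ`. -/
theorem charpoly_mulRight {K D : Type*} [Field K] [Ring D] [Algebra K D] [Module.Finite K D]
    {n : ℕ} (x : Matrix (Fin n) (Fin n) D) :
    (LinearMap.mulRight K x).charpoly = (rowMap K x).charpoly ^ n := by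
  have := charpoly_pi_map (K := K) n (fun _ => Fin n → D) (fun _ => rowMap K x)
  rw [Fin.prod_const] at this
  -- Right multiplication on `Mat_n(D)` is definitionally `rowMap K x` applied to each row.
  rw [← this, ← LinearEquiv.charpoly_conj (Matrix.ofLinearEquiv K)]
  congr 1

theorem charpoly_rowMap_field {K : Type*} [Field K] {n : ℕ} (y : Matrix (Fin n) (Fin n) K) :
    (rowMap K y).charpoly = y.charpoly := by
  rw [← Matrix.charpoly_transpose, ← Matrix.charpoly_toLin']
  congr 1
  ext v i
  simp [rowMap]

/-- If `L` splits `A`, the characteristic polynomial of right multiplication by `x` on `A` is the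
`m`-th power of that of the image of `x` in `Mat_m(L)`. -/
theorem charpoly_mulRight_baseChange {K L A : Type*} [Field K] [Field L] [Algebra K L]
    [Ring A] [Algebra K A] [Module.Finite K A] {m : ℕ}
    (e : (L ⊗[K] A) ≃ₐ[L] Matrix (Fin m) (Fin m) L) (x : A) :
    (LinearMap.mulRight K x).charpoly.map (algebraMap K L) = (e (1 ⊗ₜ[K] x)).charpoly ^ m := by
  rw [← LinearMap.charpoly_baseChange, ← charpoly_rowMap_field, ← charpoly_mulRight,
    ← LinearEquiv.charpoly_conj e.toLinearEquiv]
  congr 1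
  apply LinearMap.ext
  intro y
  obtain ⟨z, rfl⟩ := e.toLinearEquiv.surjective y
  rw [LinearEquiv.conj_apply_apply, LinearEquiv.symm_apply_apply, LinearMap.mulRight_apply,
    AlgEquiv.toLinearEquiv_apply, AlgEquiv.toLinearEquiv_apply, ← map_mul]
  congr 1
  induction z with
  | zero => simp
  | tmul a b => simp
  | add u v hu hv => simp only [map_add, hu, hv, add_mul]

theorem pow_inj_of_monic {K : Type*} [Field K] {f g : K[X]} (hf : f.Monic) (hg : g.Monic) {m : ℕ}
    (hm : m ≠ 0) (h : f ^ m = g ^ m) : f = g := by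
  refine eq_of_monic_of_associated hf hg (associated_of_dvd_dvd ?_ ?_)
  · exact (UniqueFactorizationMonoid.pow_dvd_pow_iff_dvd hm).1 h.dvd
  · exact (UniqueFactorizationMonoid.pow_dvd_pow_iff_dvd hm).1 h.symm.dvd

/-- The size `m` of the matrix algebra in a splitting of `Mat_n(Δ)` is the degree `n * d`. -/
theorem splitting_degree {F Δ : Type} [Field F] [DivisionRing Δ] [Algebra F Δ]
    [FiniteDimensional F Δ] {d n m : ℕ} (hd : d * d = Module.finrank F Δ)
    (e : (AlgebraicClosure F ⊗[F] Matrix (Fin n) (Fin n) Δ) ≃ₐ[AlgebraicClosure F]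
          Matrix (Fin m) (Fin m) (AlgebraicClosure F)) : m = n * d := by
  have h := e.toLinearEquiv.finrank_eq
  rw [Module.finrank_baseChange, Module.finrank_matrix, Module.finrank_matrix] at h
  simp only [Fintype.card_fin, Module.finrank_self, mul_one, ← hd] at h
  exact (Nat.mul_self_inj).1 (by rw [← h]; ring)

/-- Description of the (reduced) characteristic polynomial over the base field: its `d`-th power is
the characteristic polynomial of `x` acting on the `F`-space `Δⁿ`. The splitting hypothesis is used
only from right to left. -/
theorem isCharPoly_iff_of_split {F Δ : Type} [Field F] [DivisionRing Δ] [Algebra F Δ]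
    [FiniteDimensional F Δ] {d n : ℕ} (hd : d * d = Module.finrank F Δ) (hn : 0 < n)
    (hs : ∃ m, Nonempty ((AlgebraicClosure F ⊗[F] Matrix (Fin n) (Fin n) Δ) ≃ₐ[AlgebraicClosure F]
          Matrix (Fin m) (Fin m) (AlgebraicClosure F)))
    (x : Matrix (Fin n) (Fin n) Δ) (f : F[X]) :
    IsCharPoly F x f ↔ f.Monic ∧ (rowMap F x).charpoly = f ^ d := by
  have hd0 : d ≠ 0 := by
    rintro rfl
    have := Module.finrank_pos (R := F) (M := Δ)
    omega
  constructor
  · rintro ⟨m, e, h⟩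
    have hf : f.Monic := by
      have := Matrix.charpoly_monic (e (1 ⊗ₜ[F] x))
      rw [← h] at this
      exact Polynomial.monic_of_injective (algebraMap F (AlgebraicClosure F)).injective this
    refine ⟨hf, pow_inj_of_monic (LinearMap.charpoly_monic _) (hf.pow d) hn.ne' ?_⟩
    rw [← charpoly_mulRight]
    apply Polynomial.map_injective _ (algebraMap F (AlgebraicClosure F)).injective
    rw [charpoly_mulRight_baseChange e, ← h, splitting_degree hd e, ← pow_mul, mul_comm n,
      Polynomial.map_pow]
  · rintro ⟨hf, h⟩
    obtain ⟨m, ⟨e⟩⟩ := hs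
    have hm := splitting_degree hd e
    refine ⟨m, e, pow_inj_of_monic (hf.map _) (Matrix.charpoly_monic _) (m := m)
      (by subst hm; positivity) ?_⟩
    rw [← charpoly_mulRight_baseChange, charpoly_mulRight, h, hm, ← Polynomial.map_pow, ← pow_mul,
      mul_comm n]

/-- Simplicity of `L ⊗ Mat_n(Δ) ≃ Mat_n(L ⊗ Δ)` does not depend on `n > 0`. -/
theorem simple_tensor_matrix_iff {F L Δ : Type} [Field F] [Field L] [Algebra F L] [DivisionRing Δ]
    [Algebra F Δ] {n : ℕ} (hn : 0 < n) :
    IsSimpleRing (L ⊗[F] Matrix (Fin n) (Fin n) Δ) ↔ IsSimpleRing (L ⊗[F] Δ) := by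
  have : Nonempty (Fin n) := ⟨⟨0, hn⟩⟩
  have e : (L ⊗[F] Matrix (Fin n) (Fin n) Δ) ≃ₐ[F] Matrix (Fin n) (Fin n) (L ⊗[F] Δ) :=
    (Algebra.TensorProduct.congr AlgEquiv.refl (matrixEquivTensor (Fin n) F Δ)).trans <|
      (Algebra.TensorProduct.assoc F F F L Δ (Matrix (Fin n) (Fin n) F)).symm.trans
        (matrixEquivTensor (Fin n) F (L ⊗[F] Δ)).symm
  constructor
  · intro h
    have h' := IsSimpleRing.of_ringEquiv e.toRingEquiv h
    exact ⟨(TwoSidedIdeal.orderIsoMatrix (n := Fin n)).isSimpleOrder⟩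
  · intro h
    exact IsSimpleRing.of_ringEquiv e.symm.toRingEquiv inferInstance

/-- If `Mat_n(Δ)` splits over the algebraic closure, so does `Mat_k(Δ)` for every `k > 0`: both
scalar extensions are simple together with that of `Δ`, and a finite-dimensional simple algebra over
an algebraically closed field is a matrix algebra. -/
theorem exists_splitting_of_splitting {F Δ : Type} [Field F] [DivisionRing Δ] [Algebra F Δ]
    [FiniteDimensional F Δ] {d n m k : ℕ} (hd : d * d = Module.finrank F Δ) (hn : 0 < n) (hk : 0 < k)
    (e : (AlgebraicClosure F ⊗[F] Matrix (Fin n) (Fin n) Δ) ≃ₐ[AlgebraicClosure F]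
          Matrix (Fin m) (Fin m) (AlgebraicClosure F)) :
    ∃ l, Nonempty ((AlgebraicClosure F ⊗[F] Matrix (Fin k) (Fin k) Δ) ≃ₐ[AlgebraicClosure F]
          Matrix (Fin l) (Fin l) (AlgebraicClosure F)) := by
  have hm := splitting_degree hd e
  have hd0 : d ≠ 0 := by
    rintro rfl
    have := Module.finrank_pos (R := F) (M := Δ)
    omega
  have : Nonempty (Fin m) := ⟨⟨0, by subst hm; positivity⟩⟩
  have h1 : IsSimpleRing (AlgebraicClosure F ⊗[F] Matrix (Fin n) (Fin n) Δ) :=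
    IsSimpleRing.of_ringEquiv e.symm.toRingEquiv inferInstance
  have h2 := (simple_tensor_matrix_iff hk).2 ((simple_tensor_matrix_iff hn).1 h1)
  obtain ⟨l, _, h⟩ := IsSimpleRing.exists_algEquiv_matrix_of_isAlgClosed (AlgebraicClosure F)
    (AlgebraicClosure F ⊗[F] Matrix (Fin k) (Fin k) Δ)
  exact ⟨l, h⟩

/-- A polynomial coprime to an annihilating polynomial of `T` is coprime to `T.charpoly`: over the
algebraic closure, each root of `T.charpoly` is an eigenvalue of `T`, hence a root of `g`. -/
theorem charpoly_isCoprime {F V : Type*} [Field F] [AddCommGroup V] [Module F V] [Module.Finite F V]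
    (T : Module.End F V) {g h : F[X]} (hg : aeval T g = 0) (hgh : IsCoprime g h) :
    IsCoprime T.charpoly h := by
  refine (isCoprime_iff_aeval_ne_zero_of_isAlgClosed F (AlgebraicClosure F) _ _).2 fun α => ?_
  refine (aeval_ne_zero_of_isCoprime hgh α).imp_left fun hα hroot => hα ?_
  set T' : Module.End (AlgebraicClosure F) (AlgebraicClosure F ⊗[F] V) :=
    LinearMap.baseChange (AlgebraicClosure F) T with hT'
  have hev : T'.HasEigenvalue α := by
    rw [Module.End.hasEigenvalue_iff_isRoot_charpoly, hT', LinearMap.charpoly_baseChange,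
      IsRoot.def, eval_map_algebraMap, hroot]
  obtain ⟨v, hv⟩ := hev.exists_hasEigenvector
  have h0 : aeval T' (g.map (algebraMap F (AlgebraicClosure F))) = 0 := by
    have := Polynomial.aeval_algHom_apply (Module.End.baseChangeHom F (AlgebraicClosure F) V) T g
    rw [hg, map_zero] at this
    rw [Polynomial.aeval_map_algebraMap]
    exact this
  have h1 := Module.End.aeval_apply_of_hasEigenvector (p := g.map (algebraMap F _)) hv
  rw [h0, LinearMap.zero_apply, eval_map_algebraMap] at h1
  exact (smul_eq_zero.1 h1.symm).resolve_right hv.2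

theorem aeval_restrictScalars {F D V : Type*} [Field F] [Ring D] [Algebra F D]
    [AddCommGroup V] [Module F V] [Module D V] [IsScalarTower F D V]
    (T : Module.End D V) (g : F[X]) (v : V) :
    aeval (T.restrictScalars F : Module.End F V) g v = aeval T g v := by
  induction g using Polynomial.induction_on' generalizing v with
  | add p q hp hq => simp [hp, hq]
  | monomial n a =>
    simp only [aeval_monomial, Module.End.mul_apply, Module.algebraMap_end_apply]
    congr 1
    induction n generalizing v with
    | zero => simp
    | succ n ih => simp [pow_succ, ih]

instance finite_submodule {F D V : Type*} [Field F] [Ring D] [Algebra F D]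
    [AddCommGroup V] [Module F V] [Module D V] [IsScalarTower F D V] [Module.Finite F V]
    (W : Submodule D V) : Module.Finite F W :=
  inferInstanceAs (Module.Finite F (W.restrictScalars F))

/-- Splitting off a summand: if the characteristic polynomial over `F` of a `D`-linear `T` factors
as `g * h` with `g`, `h` coprime, then some `D`-subspace carries an endomorphism with characteristic
polynomial `g`, namely `ker g(T)` with the restriction of `T`. -/
theorem exists_primary_summand {F D V : Type*} [Field F] [DivisionRing D] [Algebra F D]
    [AddCommGroup V] [Module F V] [Module D V] [IsScalarTower F D V] [Module.Finite F V]
    (T : Module.End D V) {g h : F[X]} (hgm : g.Monic) (hgh : IsCoprime g h)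
    (hT : (T.restrictScalars F).charpoly = g * h) :
    ∃ (W : Submodule D V) (S : W →ₗ[D] W), (S.restrictScalars F).charpoly = g := by
  have hCH : aeval T (g * h) = 0 := by
    ext v
    rw [← aeval_restrictScalars, ← hT, LinearMap.aeval_self_charpoly]
    rfl
  -- The Bézout identity yields `V = ker g(T) ⊕ ker h(T)` as `D`-spaces.
  obtain ⟨a, b, hab⟩ := id hgh
  have hab' (v : V) : aeval T a (aeval T g v) + aeval T b (aeval T h v) = v := by
    have := congrArg (fun q => aeval T q v) hab
    simpa using this
  let W₁ := LinearMap.ker (aeval T g)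
  let W₂ := LinearMap.ker (aeval T h)
  have hcomm (p q : F[X]) (v : V) : aeval T p (aeval T q v) = aeval T q (aeval T p v) := by
    rw [← Module.End.mul_apply, ← Module.End.mul_apply, ← map_mul, ← map_mul, mul_comm]
  have hgh0 (v : V) : aeval T g (aeval T h v) = 0 := by
    rw [← Module.End.mul_apply, ← map_mul, hCH, LinearMap.zero_apply]
  have hcompl : IsCompl W₁ W₂ := by
    constructor
    · rw [Submodule.disjoint_def]
      intro v h1 h2
      rw [← hab' v, LinearMap.mem_ker.1 h1, LinearMap.mem_ker.1 h2, map_zero, map_zero, add_zero]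
    · rw [codisjoint_iff, eq_top_iff]
      intro v _
      rw [← hab' v, add_comm]
      refine Submodule.add_mem_sup ?_ ?_ <;> rw [LinearMap.mem_ker]
      · rw [hcomm, hgh0, map_zero]
      · rw [hcomm, hcomm h g, hgh0, map_zero]
  have hinv (q : F[X]) : ∀ v ∈ LinearMap.ker (aeval T q), T v ∈ LinearMap.ker (aeval T q) := by
    intro v hv
    have := hcomm q X v
    simp only [aeval_X] at this
    rw [LinearMap.mem_ker, this, LinearMap.mem_ker.1 hv, map_zero]
  let S₁ : W₁ →ₗ[D] W₁ := T.restrict (hinv g)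
  let S₂ : W₂ →ₗ[D] W₂ := T.restrict (hinv h)
  have hprod : (S₁.restrictScalars F).charpoly * (S₂.restrictScalars F).charpoly = g * h := by
    rw [← hT, ← LinearMap.charpoly_prodMap,
      ← LinearEquiv.charpoly_conj ((Submodule.prodEquivOfIsCompl W₁ W₂ hcompl).restrictScalars F)]
    congr 1
    refine LinearMap.ext fun v => ?_
    obtain ⟨w, rfl⟩ :=
      ((Submodule.prodEquivOfIsCompl W₁ W₂ hcompl).restrictScalars F).surjective v
    rw [LinearEquiv.conj_apply_apply, LinearEquiv.symm_apply_apply]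
    simp [S₁, S₂]
  have hann (q : F[X]) : aeval ((T.restrict (hinv q)).restrictScalars F : Module.End F _) q = 0 := by
    have key (r : F[X]) (v : LinearMap.ker (aeval T q)) :
        ((aeval (T.restrict (hinv q)) r v : LinearMap.ker (aeval T q)) : V) = aeval T r v := by
      induction r using Polynomial.induction_on' generalizing v with
      | add p q hp hq => simp [hp, hq]
      | monomial n a =>
        simp only [aeval_monomial, Module.End.mul_apply, Module.algebraMap_end_apply]
        rw [Submodule.coe_smul_of_tower]
        congr 1
        induction n generalizing v with
        | zero => simp
        | succ n ih => simp [pow_succ, ih]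
    refine LinearMap.ext fun v => Subtype.ext ?_
    rw [aeval_restrictScalars, key, LinearMap.mem_ker.1 v.2]
    rfl
  -- Both products equal `g * h`; since the first factor is coprime to `h` and the second to `g`,
  -- the first factor and `g` divide each other.
  have c1 : IsCoprime (S₁.restrictScalars F).charpoly h := charpoly_isCoprime _ (hann g) hgh
  have c2 : IsCoprime (S₂.restrictScalars F).charpoly g := charpoly_isCoprime _ (hann h) hgh.symm
  exact ⟨W₁, S₁, eq_of_monic_of_associated (LinearMap.charpoly_monic _) hgm <|
    associated_of_dvd_dvd (c1.dvd_of_dvd_mul_right (Dvd.intro _ hprod))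
      (c2.symm.dvd_of_dvd_mul_right (Dvd.intro _ hprod.symm))⟩

/-- A choice of `D`-basis turns an endomorphism of a `k`-dimensional left `D`-space into a matrix
acting on row vectors. -/
theorem exists_matrix_charpoly {F D V : Type*} [Field F] [DivisionRing D] [Algebra F D]
    [AddCommGroup V] [Module F V] [Module D V] [IsScalarTower F D V] [Module.Finite F D]
    [Module.Finite D V] [Module.Finite F V]
    (T : V →ₗ[D] V) {k : ℕ} (hk : Module.finrank D V = k) :
    ∃ x : Matrix (Fin k) (Fin k) D, (rowMap F x).charpoly = (T.restrictScalars F).charpoly := by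
  let e : V ≃ₗ[D] (Fin k → D) := (Module.finBasisOfFinrankEq D V hk).equivFun
  refine ⟨LinearMap.toMatrixRight' (e.toLinearMap ∘ₗ T ∘ₗ e.symm.toLinearMap), ?_⟩
  rw [← LinearEquiv.charpoly_conj (e.restrictScalars F)]
  congr 1
  ext1 v
  simp only [rowMap, Matrix.toLinearMapRight', LinearEquiv.symm_apply_apply]
  rfl

/-- Proposition 5: with `A = Mat_n(Δ)`, `Δ` a central division `F`-algebra of degree `d`,
and `f = ∏ pᵢ^{aᵢ}` monic of degree `n·d` with the `pᵢ` distinct monic irreducible,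
`f` is a characteristic polynomial of `A` iff for every `i` there is a positive integer
`nᵢ` with `aᵢ · deg pᵢ = nᵢ · d` such that `pᵢ^{aᵢ}` is a characteristic polynomial of
`Mat_{nᵢ}(Δ)`. -/
theorem isCharPoly_iff_primary_factors_isCharPoly
    (F Δ : Type) [Field F] [DivisionRing Δ] [Algebra F Δ]
    [FiniteDimensional F Δ] [Algebra.IsCentral F Δ]
    (d n : ℕ) (hd : d * d = Module.finrank F Δ) (hn : 0 < n)
    (s : ℕ) (p : Fin s → Polynomial F) (a : Fin s → ℕ)
    (hmonic : ∀ i, (p i).Monic) (hirr : ∀ i, Irreducible (p i))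
    (hdist : ∀ i j, i ≠ j → p i ≠ p j) (hapos : ∀ i, 0 < a i)
    (f : Polynomial F) (hf : f = ∏ i, p i ^ a i) (hfdeg : f.natDegree = n * d) :
    (∃ x : Matrix (Fin n) (Fin n) Δ, IsCharPoly F x f) ↔
      ∀ i, ∃ ni : ℕ, 0 < ni ∧ a i * (p i).natDegree = ni * d ∧
        ∃ x : Matrix (Fin ni) (Fin ni) Δ, IsCharPoly F x (p i ^ a i) := by
  have hd0 : 0 < d := by
    have := Module.finrank_pos (R := F) (M := Δ)
    exact Nat.pos_of_ne_zero (by rintro rfl; omega)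
  have hfm : f.Monic := hf ▸ monic_prod_of_monic _ _ fun i _ => (hmonic i).pow _
  constructor
  · rintro ⟨x, hx⟩ i
    obtain ⟨m, e, -⟩ := id hx
    have hxf := ((isCharPoly_iff_of_split hd hn ⟨m, ⟨e⟩⟩ x f).1 hx).2
    have hcop : IsCoprime ((p i ^ a i) ^ d) ((∏ j ∈ Finset.univ.erase i, p j ^ a j) ^ d) := by
      refine IsCoprime.pow (IsCoprime.prod_right fun j hj => IsCoprime.pow ?_)
      refine (hirr i).isCoprime_or_dvd (p j) |>.resolve_right fun hdvd => ?_
      exact hdist i j (Finset.ne_of_mem_erase hj).symm <|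
        eq_of_monic_of_associated (hmonic i) (hmonic j) ((hirr i).associated_of_dvd (hirr j) hdvd)
    rw [hf, ← Finset.mul_prod_erase _ _ (Finset.mem_univ i), mul_pow] at hxf
    obtain ⟨W, S, hS⟩ := exists_primary_summand (F := F) (Matrix.toLinearMapRight' x)
      (((hmonic i).pow _).pow _) hcop hxf
    -- `d · (aᵢ · deg pᵢ)` and `d² · dim_Δ W` both equal `dim_F W`.
    have hW : a i * (p i).natDegree = Module.finrank Δ W * d := by
      have h1 := congrArg natDegree hS
      rw [LinearMap.charpoly_natDegree, ← Module.finrank_mul_finrank F Δ W, ← hd,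
        natDegree_pow, natDegree_pow] at h1
      exact Nat.eq_of_mul_eq_mul_left hd0 (by rw [← h1]; ring)
    have hW0 : 0 < Module.finrank Δ W := by
      refine Nat.pos_of_ne_zero fun h0 => ?_
      rw [h0, zero_mul] at hW
      exact (Nat.mul_pos (hapos i) (hirr i).natDegree_pos).ne' hW
    obtain ⟨y, hy⟩ := exists_matrix_charpoly (F := F) S rfl
    exact ⟨_, hW0, hW, y, (isCharPoly_iff_of_split hd hW0
      (exists_splitting_of_splitting hd hn hW0 e) y _).2 ⟨(hmonic i).pow _, hy.trans hS⟩⟩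
  · intro H
    choose ni hni hdeg x hx using H
    have hsum : ∑ i, ni i = n := by
      refine Nat.eq_of_mul_eq_mul_right hd0 ?_
      rw [← hfdeg, hf, natDegree_prod_of_monic _ _ fun i _ => (hmonic i).pow _, Finset.sum_mul]
      exact Finset.sum_congr rfl fun i _ => by rw [natDegree_pow, hdeg]
    -- `n > 0` rules out `s = 0`, so some index supplies a splitting of a matrix algebra over `Δ`.
    obtain ⟨i₀⟩ : Nonempty (Fin s) := by
      by_contra hne
      rw [not_nonempty_iff] at hne
      rw [Finset.univ_eq_empty, Finset.sum_empty] at hsum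
      omega
    obtain ⟨_, e₀, -⟩ := id (hx i₀)
    have hx' (i : Fin s) : (rowMap F (x i)).charpoly = (p i ^ a i) ^ d := by
      obtain ⟨m, e, -⟩ := id (hx i)
      exact ((isCharPoly_iff_of_split hd (hni i) ⟨m, ⟨e⟩⟩ _ _).1 (hx i)).2
    let T : (∀ i, Fin (ni i) → Δ) →ₗ[Δ] (∀ i, Fin (ni i) → Δ) :=
      LinearMap.pi fun i => Matrix.toLinearMapRight' (x i) ∘ₗ LinearMap.proj i
    have hT : (T.restrictScalars F).charpoly = f ^ d := by
      rw [hf, ← Finset.prod_pow, ← Finset.prod_congr rfl fun i _ => hx' i]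
      exact charpoly_pi_map s (fun i => Fin (ni i) → Δ) fun i => rowMap F (x i)
    obtain ⟨y, hy⟩ := exists_matrix_charpoly (F := F) T (k := n) (by
      simp [Module.finrank_pi_fintype, hsum])
    exact ⟨y, (isCharPoly_iff_of_split hd hn
      (exists_splitting_of_splitting hd (hni i₀) hn e₀) y f).2 ⟨hfm, hy.trans hT⟩⟩
end

section
/- Let A ≅ Mat_n(Δ) be a finite-dimensional central simple algebra over a field F with Δ a central division F-algebra of degree d, let p(t) ∈ F[t] be a monic irreducible polynomial, and put E := F[t]/(p(t)). Then a polynomial of the form f(t) = p(t)^a of degree nd is a characteristic polynomial of A if and only if there is an F-algebra embedding of E into A. -/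
/-!
Write `A = Mat_n(Δ)` and `K` for the algebraic closure of `F`. An embedding of `E = F[t]/(p)` into
the nonzero algebra `A` is the same thing as an element `y` of `A` with `p(y) = 0`.

If `x` has characteristic polynomial `p ^ a`, then `p(x) ^ a = 0` by Cayley–Hamilton
(`aeval_eq_zero_of_charpoly`). Regard `x` as an endomorphism of the `Δ`-space `Δ ^ n`; its
semisimplification with respect to `p` lives on a `Δ`-space of the same dimension and is killed
by `p` (`exists_end_aeval_eq_zero`), which gives the required `y`.

Conversely, let `p(x) = 0`. Since `A` is central simple, `K ⊗ A` is simple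
(`isSimpleRing_baseChange`), hence a matrix algebra over `K`. The characteristic polynomial of left
multiplication by `x` on `A` is a power of `p` (`charpoly_eq_pow`), and over `K` it is the `nd`-th
power of the characteristic polynomial of `x` (`charpoly_mulLeft`). Comparing degrees, the latter
and `p ^ a` are monic with the same `nd`-th power, so they agree (`matrix_charpoly_eq`).
-/

open Polynomial TensorProduct

/-- A linear map intertwining two endomorphisms intertwines their values under any polynomial. -/
theorem intertwine_aeval {F D V V' : Type*} [Field F] [Ring D] [Algebra F D]
    [AddCommGroup V] [Module D V] [Module F V] [IsScalarTower F D V]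
    [AddCommGroup V'] [Module D V'] [Module F V'] [IsScalarTower F D V']
    (g : V →ₗ[D] V') (T : Module.End D V) (T' : Module.End D V')
    (h : ∀ v, g (T v) = T' (g v)) (p : F[X]) (v : V) :
    g (aeval T p v) = aeval T' p (g v) := by
  induction p using Polynomial.induction_on generalizing v with
  | C r =>
    simp only [aeval_C, Module.algebraMap_end_apply]
    rw [← algebraMap_smul D r v, map_smul, algebraMap_smul]
  | add p q hp hq => simp [hp, hq]
  | monomial n r ih =>
    rw [pow_succ, ← mul_assoc, map_mul, map_mul (aeval T'), aeval_X, aeval_X, Module.End.mul_apply,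
      Module.End.mul_apply, ih, h]

/-- Semisimplification: if `p(T)` is nilpotent, then the sum of the graded pieces of the filtration
by the ranges of the `p(T) ^ i`, on each of which `p` kills the induced endomorphism, is isomorphic
to `V` because vector spaces over a division ring split; so `V` carries an endomorphism killed
by `p`. -/
theorem exists_end_aeval_eq_zero {F D : Type*} [Field F] [DivisionRing D] [Algebra F D]
    (p : F[X]) (a : ℕ) : ∀ (V : Type) [AddCommGroup V] [Module D V] [Module F V]
    [IsScalarTower F D V] (T : Module.End D V), aeval T (p ^ a) = 0 →
    ∃ T' : Module.End D V, aeval T' p = 0 := by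
  induction a with
  | zero =>
    intro V _ _ _ _ T hT
    refine ⟨T, ?_⟩
    rw [pow_zero, map_one] at hT
    rw [← mul_one (aeval T p), hT, mul_zero]
  | succ a ih =>
    intro V _ _ _ _ T hT
    have hcomm : ∀ v, T (aeval T p v) = aeval T p (T v) := fun v =>
      intertwine_aeval T T T (fun _ => rfl) p v
    let W : Submodule D V := LinearMap.range (aeval T p)
    have hW : ∀ w ∈ W, T w ∈ W := by
      rintro _ ⟨v, rfl⟩
      exact ⟨T v, (hcomm v).symm⟩
    let TW : Module.End D W := T.restrict hW
    let TQ : Module.End D (V ⧸ W) := W.mapQ W T hW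
    have h1 : aeval TW (p ^ a) = 0 := by
      ext ⟨_, v, rfl⟩
      have := intertwine_aeval W.subtype TW T (fun _ => rfl) (p ^ a) ⟨_, v, rfl⟩
      simp only [Submodule.subtype_apply] at this
      rw [this, ← Module.End.mul_apply, ← map_mul, ← pow_succ, hT]
      simp
    have h2 : aeval TQ p = 0 := by
      ext v
      have := intertwine_aeval W.mkQ T TQ (fun _ => rfl) p v
      simp only [LinearMap.comp_apply, ← this]
      simp [W]
    obtain ⟨S, hS⟩ := ih W TW h1
    obtain ⟨C, hC⟩ := W.exists_isCompl
    -- Transport the endomorphism of `W × V ⧸ W` along a splitting of `W ⊆ V`.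
    let e : (W × (V ⧸ W)) ≃ₗ[D] V :=
      ((LinearEquiv.refl D W).prodCongr (W.quotientEquivOfIsCompl C hC)).trans
        (W.prodEquivOfIsCompl C hC)
    let T' : Module.End D V := e.toLinearMap ∘ₗ S.prodMap TQ ∘ₗ e.symm.toLinearMap
    refine ⟨T', ?_⟩
    ext v
    obtain ⟨x, rfl⟩ := e.surjective v
    have h3 := intertwine_aeval e.toLinearMap (S.prodMap TQ) T'
      (fun v => by simp [T']) p x
    have h4 := intertwine_aeval (LinearMap.fst D W (V ⧸ W)) (S.prodMap TQ) S (fun v => rfl) p x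
    have h5 := intertwine_aeval (LinearMap.snd D W (V ⧸ W)) (S.prodMap TQ) TQ (fun v => rfl) p x
    rw [hS] at h4
    rw [h2] at h5
    have h6 : aeval (S.prodMap TQ) p x = 0 := Prod.ext h4 h5
    rw [h6] at h3
    simpa using h3.symm

/-- `Mat_n(Δ)` is the algebra of endomorphisms of the right `Δ`-space of column vectors. -/
theorem exists_matrix_aeval_eq_zero {F Δ : Type} [Field F] [DivisionRing Δ] [Algebra F Δ]
    {n : ℕ} (p : F[X]) (a : ℕ) (x : Matrix (Fin n) (Fin n) Δ) (hx : aeval x (p ^ a) = 0) :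
    ∃ y : Matrix (Fin n) (Fin n) Δ, aeval y p = 0 := by
  let e : Matrix (Fin n) (Fin n) Δ ≃ₐ[F] Module.End Δᵐᵒᵖ (Fin n → Δ) :=
    (AlgEquiv.moduleEndSelfOp F (A := Δ)).mapMatrix.trans
      (endVecAlgEquivMatrixEnd (Fin n) F Δᵐᵒᵖ Δ).symm
  obtain ⟨T, hT⟩ := exists_end_aeval_eq_zero p a (Fin n → Δ) (e x) (by
    rw [aeval_algHom_apply, hx, map_zero])
  exact ⟨e.symm T, by rw [aeval_algHom_apply, hT, map_zero]⟩

/-- Cayley–Hamilton for characteristic polynomials computed after splitting `A`. -/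
theorem aeval_eq_zero_of_charpoly {F K A : Type*} [Field F] [Field K] [Algebra F K] [Ring A]
    [Algebra F A] {m : ℕ} (e : (K ⊗[F] A) ≃ₐ[K] Matrix (Fin m) (Fin m) K) (x : A) (f : F[X])
    (h : f.map (algebraMap F K) = (e (1 ⊗ₜ x)).charpoly) : aeval x f = 0 := by
  have h1 := Matrix.aeval_self_charpoly (e (1 ⊗ₜ x))
  rw [← h, aeval_algHom_apply, EmbeddingLike.map_eq_zero_iff, aeval_map_algebraMap] at h1
  have h2 : aeval (Algebra.TensorProduct.includeRight (R := F) (A := K) x) f = 0 := h1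
  rw [aeval_algHom_apply] at h2
  exact Algebra.TensorProduct.includeRight_injective (algebraMap F K).injective
    (h2.trans (map_zero _).symm)

open MulOpposite in
/-- A finite-dimensional central simple algebra `A` is a simple `A ⊗ Aᵐᵒᵖ`-module with endomorphism
ring `F`, so by the Jacobson density theorem every `F`-linear endomorphism of `A` is a sum of maps
`x ↦ a * x * b`. -/
theorem exists_mulLeftRight_eq {F A : Type*} [Field F] [Ring A] [Algebra F A]
    [FiniteDimensional F A] [Algebra.IsCentral F A] [IsSimpleRing A] (f : Module.End F A) :
    ∃ r : A ⊗[F] Aᵐᵒᵖ, AlgHom.mulLeftRight F A r = f := by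
  let _ : Module (A ⊗[F] Aᵐᵒᵖ) A := instModuleTensorProductMop F A
  have hsm : ∀ (r : A ⊗[F] Aᵐᵒᵖ) (x : A), r • x = AlgHom.mulLeftRight F A r x := fun _ _ => rfl
  have hsm' : ∀ a b x : A, (a ⊗ₜ[F] op b : A ⊗[F] Aᵐᵒᵖ) • x = a * x * b := fun a b x => by
    rw [hsm, AlgHom.mulLeftRight_apply, unop_op]
  have : IsSimpleModule (A ⊗[F] Aᵐᵒᵖ) A := by
    refine isSimpleModule_iff_toSpanSingleton_surjective.2 ⟨inferInstance, fun x hx y => ?_⟩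
    let N : Submodule (A ⊗[F] Aᵐᵒᵖ) A := Submodule.span _ {x}
    let I : TwoSidedIdeal A := .mk' (N : Set A) N.zero_mem N.add_mem N.neg_mem
      (fun {a b} hb => by
        have := N.smul_mem (a ⊗ₜ[F] op 1) hb
        rwa [hsm', mul_one] at this)
      (fun {a b} ha => by
        have := N.smul_mem (1 ⊗ₜ[F] op b) ha
        rwa [hsm', one_mul] at this)
    have hI : ∀ z, z ∈ I ↔ z ∈ N := fun z => TwoSidedIdeal.mem_mk' ..
    have h1 := IsSimpleRing.one_mem_of_ne_zero_mem I hx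
      ((hI x).2 (Submodule.mem_span_singleton_self x))
    have h2 := (hI y).1 (by simpa using I.mul_mem_left y 1 h1)
    exact Submodule.mem_span_singleton.1 h2
  -- An endomorphism of the bimodule `A` is multiplication by the image of `1`, which is central.
  have hend : ∀ (g : Module.End (A ⊗[F] Aᵐᵒᵖ) A), ∃ c : F, ∀ x, g x = c • x := by
    intro g
    have h1 : ∀ x, g x = x * g 1 := fun x => by
      have := g.map_smul (x ⊗ₜ[F] op 1) 1
      rwa [hsm', hsm', mul_one, mul_one, mul_one] at this
    have h2 : ∀ x, g x = g 1 * x := fun x => by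
      have := g.map_smul (1 ⊗ₜ[F] op x) 1
      rwa [hsm', hsm', one_mul, one_mul, one_mul] at this
    obtain ⟨c, hc⟩ := Algebra.IsCentral.out (K := F) (D := A)
      (Subalgebra.mem_center_iff.2 fun x => (h1 x).symm.trans (h2 x))
    refine ⟨c, fun x => ?_⟩
    rw [h2, ← hc, Algebra.smul_def]
    rfl
  let f' : Module.End (Module.End (A ⊗[F] Aᵐᵒᵖ) A) A :=
    { toFun := f
      map_add' := f.map_add
      map_smul' := fun g x => by
        obtain ⟨c, hc⟩ := hend g
        simp [Module.End.smul_def, hc] }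
  let b := Module.finBasis F A
  classical
  obtain ⟨r, hr⟩ := jacobson_density f' (Finset.univ.image b)
  refine ⟨r, b.ext fun i => ?_⟩
  exact (hr (b i) (by simp)).symm

/-- By `exists_mulLeftRight_eq` a two-sided ideal of `K ⊗ A` is stable under `id ⊗ f` for all linear
`f : A → A`. -/
theorem isSimpleRing_baseChange (F K A : Type*) [Field F] [Field K] [Algebra F K] [Ring A]
    [Algebra F A] [FiniteDimensional F A] [Algebra.IsCentral F A] [IsSimpleRing A] :
    IsSimpleRing (K ⊗[F] A) := by
  refine .of_eq_bot_or_eq_top fun I => or_iff_not_imp_left.2 fun hI => ?_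
  have hstab : ∀ (f : Module.End F A) (z : K ⊗[F] A), z ∈ I → f.lTensor K z ∈ I := by
    intro f z hz
    obtain ⟨r, rfl⟩ := exists_mulLeftRight_eq f
    induction r using TensorProduct.induction_on with
    | zero => simp [I.zero_mem]
    | add r s hr hs =>
      rw [map_add, LinearMap.lTensor_add]
      exact I.add_mem hr hs
    | tmul a b =>
      have : (AlgHom.mulLeftRight F A (a ⊗ₜ b)).lTensor K z =
          (1 ⊗ₜ a) * z * (1 ⊗ₜ b.unop) := by
        clear hz
        induction z using TensorProduct.induction_on with
        | zero => simp
        | tmul c y => simp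
        | add y z hy hz' => rw [map_add, hy, hz', mul_add, add_mul]
      rw [this]
      exact I.mul_mem_right _ _ (I.mul_mem_left _ _ hz)
  obtain ⟨z, hz, hz0⟩ : ∃ z ∈ I, z ≠ 0 := by
    by_contra! h
    exact hI (eq_bot_iff.2 fun z hz => (TwoSidedIdeal.mem_bot _).2 (h z hz))
  let b := Module.finBasis F A
  obtain ⟨c, rfl⟩ := TensorProduct.eq_repr_basis_right b z
  obtain ⟨j, hj⟩ : ∃ j, c j ≠ 0 := by
    by_contra! h
    exact hz0 (by rw [show c = 0 from Finsupp.ext h]; simp)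
  -- Sending `b j` to `1` and the other basis vectors to `0` produces the unit `c j ⊗ 1` in `I`.
  have h1 := hstab ((b.coord j).smulRight 1) _ hz
  have h2 : ((b.coord j).smulRight (1 : A)).lTensor K (c.sum fun i m ↦ m ⊗ₜ b i) =
      c j ⊗ₜ 1 := by
    rw [Finsupp.sum_fintype _ _ (by simp), map_sum, Finset.sum_eq_single j]
    · simp
    · intro i _ hij
      simp [hij]
    · simp
  rw [h2] at h1
  have h3 := I.mul_mem_left ((c j)⁻¹ ⊗ₜ 1) _ h1
  rw [Algebra.TensorProduct.tmul_mul_tmul, inv_mul_cancel₀ hj, one_mul] at h3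
  exact I.one_mem_iff.1 h3

open Kronecker in
/-- Left multiplication by `M` on `m × m` matrices acts on each of the `m` columns as `M`, so it is
represented by `M ⊗ₖ 1`. -/
theorem charpoly_mulLeft {K : Type*} [Field K] {m : ℕ} (M : Matrix (Fin m) (Fin m) K) :
    (LinearMap.mulLeft K M).charpoly = M.charpoly ^ m := by
  rw [← LinearMap.charpoly_toMatrix _ (Matrix.stdBasis K (Fin m) (Fin m))]
  have h1 : LinearMap.toMatrix (Matrix.stdBasis K (Fin m) (Fin m))
      (Matrix.stdBasis K (Fin m) (Fin m)) (LinearMap.mulLeft K M) =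
      M ⊗ₖ (1 : Matrix (Fin m) (Fin m) K) := by
    ext ⟨i, j⟩ ⟨k, l⟩
    rw [LinearMap.toMatrix_apply, Matrix.stdBasis_eq_single, LinearMap.mulLeft_apply]
    simp [Matrix.stdBasis, Matrix.mul_apply, Matrix.single_apply, Matrix.one_apply, eq_comm]
    split_ifs with h <;> simp [h]
  have h2 : (M ⊗ₖ (1 : Matrix (Fin m) (Fin m) K)).charmatrix =
      M.charmatrix ⊗ₖ (1 : Matrix (Fin m) (Fin m) K[X]) := by
    ext1 ⟨i, j⟩ ⟨k, l⟩
    by_cases hi : i = k <;> by_cases hj : j = l <;>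
      simp [hi, hj]
  rw [h1, Matrix.charpoly, h2, Matrix.det_kronecker]
  simp [Matrix.charpoly]

/-- Over an algebraic closure, the roots of the characteristic polynomial of `T` are eigenvalues,
hence roots of `p`; so the part of the characteristic polynomial prime to `p` is trivial. -/
theorem charpoly_eq_pow {F V : Type*} [Field F] [AddCommGroup V] [Module F V]
    [FiniteDimensional F V] (T : Module.End F V) (p : F[X]) (hp : Irreducible p)
    (hm : p.Monic) (hT : aeval T p = 0) : ∃ k, T.charpoly = p ^ k := by
  have hne : T.charpoly ≠ 0 := T.charpoly_monic.ne_zero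
  obtain ⟨r, hr, hk⟩ :=
    (FiniteMultiplicity.of_not_isUnit hp.not_isUnit hne).exists_eq_pow_mul_and_not_dvd
  refine ⟨multiplicity p T.charpoly, ?_⟩
  have hr1 : r.Monic := (hm.pow _).of_mul_monic_left (hr ▸ T.charpoly_monic)
  have hcop : IsCoprime p r := (hp.coprime_iff_not_dvd).2 hk
  have : r = 1 := by
    by_contra hne1
    obtain ⟨μ, hμ⟩ := IsAlgClosed.exists_aeval_eq_zero (AlgebraicClosure F) r
      (fun h => hne1 ((hr1.degree_le_zero_iff_eq_one).1 h.le))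
    have h1 : (T.baseChange (AlgebraicClosure F)).charpoly.IsRoot μ := by
      rw [LinearMap.charpoly_baseChange, IsRoot, eval_map_algebraMap, hr, map_mul, hμ, mul_zero]
    have h2 := (Module.End.hasEigenvalue_iff_isRoot_charpoly _ _).2 h1
    obtain ⟨v, hv⟩ := h2.exists_hasEigenvector
    have h3 := Module.End.aeval_apply_of_hasEigenvector
      (p := p.map (algebraMap F (AlgebraicClosure F))) hv
    have h4 : aeval (T.baseChange (AlgebraicClosure F)) p = 0 := by
      have := aeval_algHom_apply (Module.End.baseChangeHom F (AlgebraicClosure F) V) T p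
      rw [hT, map_zero] at this
      exact this
    rw [aeval_map_algebraMap, h4, eval_map_algebraMap] at h3
    have h5 : aeval μ p = 0 := by
      simpa [hv.2] using h3.symm
    obtain ⟨u, w, huw⟩ := hcop
    have := congrArg (aeval μ) huw
    simp [h5, hμ] at this
  rwa [this, mul_one] at hr

/-- The converse direction for a fixed splitting `e`. Put `χ := charpoly (e (1 ⊗ x))`. Left
multiplication by `x` on `A` has characteristic polynomial a power of `p`, while after base change
it is left multiplication by `e (1 ⊗ x)`, with characteristic polynomial `χ ^ N`. Comparing degrees,
`χ ^ N = (p ^ a) ^ N`, and monic polynomials over a field have unique `N`-th roots. -/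
theorem matrix_charpoly_eq {F K A : Type*} [Field F] [Field K] [Algebra F K] [Ring A]
    [Algebra F A] [FiniteDimensional F A] {m N a : ℕ}
    (e : (K ⊗[F] A) ≃ₐ[K] Matrix (Fin m) (Fin m) K) (x : A) (p : F[X]) (hp : Irreducible p)
    (hm : p.Monic) (hx : aeval x p = 0) (hN : 0 < N) (hA : Module.finrank F A = N * N)
    (ha : a * p.natDegree = N) :
    (p ^ a).map (algebraMap F K) = (e (1 ⊗ₜ x)).charpoly := by
  have hmN : m = N := by
    have := e.toLinearEquiv.finrank_eq
    rw [Module.finrank_baseChange, hA, Module.finrank_matrix] at this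
    simp at this
    exact (Nat.mul_self_inj.1 this).symm
  subst hmN
  obtain ⟨k, hk⟩ := charpoly_eq_pow (LinearMap.mulLeft F x) p hp hm (by
    have := aeval_algHom_apply (Algebra.lmul F A) x p
    rw [hx, map_zero] at this
    exact this)
  have hdeg := congrArg natDegree hk
  rw [LinearMap.charpoly_natDegree, hA, hm.natDegree_pow] at hdeg
  have hka : k = a * m := by
    refine Nat.eq_of_mul_eq_mul_right hp.natDegree_pos ?_
    rw [← hdeg, mul_right_comm, ha]
  have h1 : (LinearMap.mulLeft K (e (1 ⊗ₜ x))) =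
      e.toLinearEquiv.conj ((LinearMap.mulLeft F x).baseChange K) := by
    ext1 y
    obtain ⟨z, rfl⟩ := e.surjective y
    induction z using TensorProduct.induction_on with
    | zero => simp
    | tmul c y => simp [LinearEquiv.conj_apply, ← map_mul]
    | add y z hy hz => rw [map_add, map_add, map_add, hy, hz]
  have h2 := charpoly_mulLeft (e (1 ⊗ₜ x))
  rw [h1, LinearEquiv.charpoly_conj, LinearMap.charpoly_baseChange, hk, hka, pow_mul,
    Polynomial.map_pow] at h2
  have h3 := (UniqueFactorizationMonoid.pow_dvd_pow_iff_dvd hN.ne').1 h2.dvd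
  have h4 := (UniqueFactorizationMonoid.pow_dvd_pow_iff_dvd hN.ne').1 h2.symm.dvd
  exact eq_of_monic_of_associated ((hm.pow a).map _) (Matrix.charpoly_monic _)
    (associated_of_dvd_dvd h3 h4)

/-- Lemma 6: let `A = Mat_n(Δ)` with `Δ` a central division `F`-algebra of degree `d`,
`p ∈ F[t]` monic irreducible and `E = F[t]/(p)`. A polynomial of the form `p^a` of degree
`n·d` is a characteristic polynomial of `A` iff there is an `F`-algebra embedding of `E`
into `A`. -/
theorem isCharPoly_pow_iff_exists_embedding
    (F Δ : Type) [Field F] [DivisionRing Δ] [Algebra F Δ]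
    [FiniteDimensional F Δ] [Algebra.IsCentral F Δ]
    (d n : ℕ) (hd : d * d = Module.finrank F Δ) (hn : 0 < n)
    (p : Polynomial F) (hmonic : p.Monic) (hirr : Irreducible p)
    (a : ℕ) (ha : 0 < a) (hdeg : a * p.natDegree = n * d) :
    (∃ x : Matrix (Fin n) (Fin n) Δ, IsCharPoly F x (p ^ a)) ↔
      ∃ ρ : AdjoinRoot p →ₐ[F] Matrix (Fin n) (Fin n) Δ, Function.Injective ρ := by
  constructor
  · rintro ⟨x, m, e, hx⟩
    obtain ⟨y, hy⟩ := exists_matrix_aeval_eq_zero p a x (aeval_eq_zero_of_charpoly e x _ hx)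
    have := Fact.mk hirr
    have : NeZero n := ⟨hn.ne'⟩
    let ρ : AdjoinRoot p →ₐ[F] Matrix (Fin n) (Fin n) Δ :=
      Ideal.Quotient.liftₐ _ (aeval y) (fun q hq => by
        obtain ⟨r, rfl⟩ := Ideal.mem_span_singleton.1 hq
        rw [map_mul, hy, zero_mul])
    exact ⟨ρ, ρ.toRingHom.injective⟩
  · rintro ⟨ρ, -⟩
    have : NeZero n := ⟨hn.ne'⟩
    have hd0 : 0 < d := Nat.pos_of_ne_zero (by
      rintro rfl
      exact Module.finrank_pos.ne hd)
    have := isSimpleRing_baseChange F (AlgebraicClosure F) (Matrix (Fin n) (Fin n) Δ)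
    obtain ⟨m, -, ⟨e⟩⟩ := IsSimpleRing.exists_algEquiv_matrix_of_isAlgClosed
      (AlgebraicClosure F) (AlgebraicClosure F ⊗[F] Matrix (Fin n) (Fin n) Δ)
    refine ⟨ρ (AdjoinRoot.root p), m, e, matrix_charpoly_eq e _ p hirr hmonic ?_
      (Nat.mul_pos hn hd0) ?_ hdeg⟩
    · rw [aeval_algHom_apply, AdjoinRoot.aeval_eq, AdjoinRoot.mk_self, map_zero]
    · rw [Module.finrank_matrix, ← hd, Fintype.card_fin]
      ring
end

section
/- Let Δ be a finite-dimensional central division algebra over a field F of characteristic 0 (or more generally, consider only conjugacy classes with separable minimal polynomial). Then the set of all conjugacy classes of the multiplicative group Δ^× whose minimal polynomial is separable is in bijection with the set of monic irreducible separable polynomials p ∈ F[t] with p ≠ t such that deg(p) · deg(Δ_p) = deg(Δ), where Δ_p is the division part of the central simple algebra Δ ⊗_F k(p) over k(p) := F[t]/(p); the bijection sends a conjugacy class to the (necessarily irreducible) minimal polynomial of its elements. -/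
/-! Everything rests on the ring `R = k ⊗ Δ` with `k = F[t]/(p)`, which is simple Artinian
(`isSimpleRing_tensorProduct`) and so has exactly one simple module up to isomorphism
(`exists_linearEquiv_of_transitive`). Let `R ≅ Mat_c(D)`, so that this module is `Dᶜ`; counting
dimensions gives `deg Δ = c · deg D`, and the condition `deg p · deg D = deg Δ` says `c = [k : F]`.

An embedding `j : k → Δ`, that is, a root of `p` in `Δ`, makes `Δ` a simple `R`-module, with `Δ`
acting on the left and `k` on the right through `j`. Two embeddings give isomorphic modules, and
the isomorphism is right multiplication by a unit conjugating one into the other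
(`exists_conj_of_algHom`). One embedding gives `Δ ≅ Dᶜ`, and comparing dimensions over `F` gives
`c = [k : F]` (`finrank_mul_eq_deg_of_algHom`).

Conversely, if `c = [k : F]`, then `Dᶜ` has the same `F`-dimension as `Δ`, so it is generated over
`Δ` by any nonzero vector `v`. Some `d ∈ Δ` then satisfies `d v = t v`, whence `p(d) v = p(t) v = 0`
and `p(d) = 0` (`exists_aeval_eq_zero`). -/

open Polynomial TensorProduct

/-- `p.natDegree * deg(Δ_p) = degΔ`, where `Δ_p` is the division part of the central simple
`k(p)`-algebra `Δ ⊗_F k(p)`, `k(p) = F[t]/(p)`: expressed by quantifying over all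
presentations `k(p) ⊗_F Δ ≅ Mat_c(D)` with `D` a division `k(p)`-algebra and all `dp`
with `dp² = [D : k(p)]`. -/
def DegMulDegDivisionPartEq (F : Type) [Field F] (Δ : Type) [DivisionRing Δ]
    [Algebra F Δ] (p : Polynomial F) (degΔ : ℕ) : Prop :=
  ∀ (c dp : ℕ) (D : Type) [DivisionRing D] [Algebra (AdjoinRoot p) D],
    Nonempty ((AdjoinRoot p ⊗[F] Δ) ≃ₐ[AdjoinRoot p] Matrix (Fin c) (Fin c) D) →
    dp * dp = Module.finrank (AdjoinRoot p) D →
    p.natDegree * dp = degΔ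

/-- The tensor product of a central division algebra with a field extension is a simple ring. In
coordinates with respect to a basis of `k`, a nonzero element of a two-sided ideal with a
coefficient `1` either has only central coefficients, so that it is a unit `1 ⊗ a`, or has a
nonzero commutator with some `a ⊗ 1`, which lies in the ideal and has smaller support. -/
theorem isSimpleRing_tensorProduct (F Δ k : Type) [Field F] [DivisionRing Δ] [Algebra F Δ]
    [Algebra.IsCentral F Δ] [Field k] [Algebra F k] : IsSimpleRing (k ⊗[F] Δ) := by
  suffices h : IsSimpleRing (Δ ⊗[F] k) from
    .of_ringEquiv (Algebra.TensorProduct.comm F Δ k).toRingEquiv h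
  let b := Module.Basis.ofVectorSpace F k
  let B := Algebra.TensorProduct.basis Δ b
  have hleft (a : Δ) (w : Δ ⊗[F] k) : (a ⊗ₜ[F] (1 : k)) * w = a • w := by
    induction w using TensorProduct.induction_on with
    | zero => simp
    | tmul x y => simp [TensorProduct.smul_tmul']
    | add x y hx hy => rw [mul_add, hx, hy, smul_add]
  have hright (a : Δ) (w : Δ ⊗[F] k) (i) :
      B.repr (w * (a ⊗ₜ[F] (1 : k))) i = B.repr w i * a := by
    induction w using TensorProduct.induction_on with
    | zero => simp
    | tmul x y =>
      simp [B, Algebra.TensorProduct.basis_repr_tmul, mul_assoc, Algebra.commutes]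
    | add x y hx hy => simp [add_mul, hx, hy]
  have key (I : TwoSidedIdeal (Δ ⊗[F] k)) (n : ℕ) :
      ∀ w ∈ I, w ≠ 0 → (B.repr w).support.card = n → (1 : Δ ⊗[F] k) ∈ I := by
    induction n using Nat.strong_induction_on with
    | _ n ih =>
    intro w hw hw0 hn
    obtain ⟨i, hi⟩ : ∃ i, B.repr w i ≠ 0 := by
      by_contra! h
      exact hw0 (B.repr.map_eq_zero_iff.1 (Finsupp.ext h))
    set u := (B.repr w i)⁻¹ • w with hu
    have huI : u ∈ I := by rw [hu, ← hleft]; exact I.mul_mem_left _ _ hw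
    have hui : B.repr u i = 1 := by simp [hu, hi]
    have hsupp (j) (hj : B.repr w j = 0) : B.repr u j = 0 := by simp [hu, hj]
    by_cases hc : ∀ a : Δ, (a ⊗ₜ[F] (1 : k)) * u - u * (a ⊗ₜ[F] (1 : k)) = 0
    · have hF (j) : ∃ r : F, algebraMap F Δ r = B.repr u j := by
        have : B.repr u j ∈ Subalgebra.center F Δ := by
          rw [Subalgebra.mem_center_iff]
          intro a
          have := congrArg (fun w ↦ B.repr w j) (hc a)
          simpa [hleft, hright, sub_eq_zero] using this
        rw [Algebra.IsCentral.center_eq_bot] at this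
        exact Algebra.mem_bot.1 this
      have hmem : u ∈ (Algebra.TensorProduct.includeRight : k →ₐ[F] Δ ⊗[F] k).range := by
        rw [← B.linearCombination_repr u, Finsupp.linearCombination_apply]
        refine Subalgebra.sum_mem _ fun j _ ↦ ?_
        obtain ⟨r, hr⟩ := hF j
        refine ⟨r • b j, ?_⟩
        simp [B, ← hr, Algebra.TensorProduct.basis_apply]
      obtain ⟨a, ha⟩ := hmem
      have ha0 : a ≠ 0 := by
        rintro rfl
        have : u = 0 := by simpa using ha.symm
        simp [this] at hui
      have := I.mul_mem_left ((1 : Δ) ⊗ₜ[F] a⁻¹) u huI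
      rw [← ha] at this
      simpa [ha0, Algebra.TensorProduct.one_def] using this
    · push Not at hc
      obtain ⟨a, ha⟩ := hc
      refine ih _ ?_ _ (I.sub_mem (I.mul_mem_left _ _ huI) (I.mul_mem_right _ _ huI)) ha rfl
      rw [← hn]
      refine Finset.card_lt_card (Finset.ssubset_iff_of_subset ?_ |>.2 ⟨i, ?_, ?_⟩)
      · intro j hj
        rw [Finsupp.mem_support_iff] at hj ⊢
        contrapose! hj
        simp [hleft, hright, hsupp j hj]
      · simpa using hi
      · simp [hleft, hright, hui]
  refine .of_eq_bot_or_eq_top fun I ↦ or_iff_not_imp_left.2 fun hI ↦ I.one_mem_iff.1 ?_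
  obtain ⟨w, hw, hw0 : w ≠ 0⟩ := SetLike.exists_of_lt (bot_lt_iff_ne_bot.mpr hI)
  exact key I _ w hw hw0 rfl

/-- Uniqueness of the simple module over a simple Artinian ring, for modules given by their
representations; simplicity is expressed as transitivity on nonzero vectors. -/
theorem exists_linearEquiv_of_transitive {F R M N : Type} [Field F] [Ring R] [Algebra F R]
    [IsSimpleRing R] [IsArtinianRing R] [AddCommGroup M] [Module F M] [AddCommGroup N]
    [Module F N] [Nontrivial M] [Nontrivial N]
    (ρ : R →ₐ[F] Module.End F M) (σ : R →ₐ[F] Module.End F N)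
    (hρ : ∀ m, m ≠ 0 → ∀ m', ∃ r, ρ r m = m') (hσ : ∀ m, m ≠ 0 → ∀ m', ∃ r, σ r m = m') :
    ∃ e : M ≃ₗ[F] N, ∀ r m, e (ρ r m) = σ r (e m) := by
  let : Module R M := Module.compHom M ρ.toRingHom
  let : Module R N := Module.compHom N σ.toRingHom
  have : IsSimpleModule R M := isSimpleModule_iff_toSpanSingleton_surjective.2 ⟨‹_›, hρ⟩
  have : IsSimpleModule R N := isSimpleModule_iff_toSpanSingleton_surjective.2 ⟨‹_›, hσ⟩
  -- Both modules embed in the isotypic module `M × N`.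
  let eM := LinearEquiv.ofInjective (LinearMap.inl R M N) LinearMap.inl_injective
  let eN := LinearEquiv.ofInjective (LinearMap.inr R M N) LinearMap.inr_injective
  have := IsSimpleModule.congr eM.symm
  have := IsSimpleModule.congr eN.symm
  obtain ⟨e⟩ := IsSimpleRing.isIsotypic R (M × N) (LinearMap.range (LinearMap.inr R M N))
    (LinearMap.range (LinearMap.inl R M N))
  let f : M ≃ₗ[R] N := (eM.trans e).trans eN.symm
  refine ⟨{ f with map_smul' := fun a m ↦ ?_ }, fun r m ↦ f.map_smul r m⟩
  have h1 : a • m = (algebraMap F R a) • m := by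
    change _ = ρ (algebraMap F R a) m
    simp [Module.algebraMap_end_apply]
  have h2 : a • f m = (algebraMap F R a) • f m := by
    change _ = σ (algebraMap F R a) (f m)
    simp [Module.algebraMap_end_apply]
  change f (a • m) = a • f m
  rw [h1, h2, map_smul]

/-- The action of `k ⊗ Δ` on `Δ` attached to an embedding `j : k → Δ`: the factor `Δ` acts by
left multiplication and `k` by right multiplication through `j`. -/
noncomputable def leftRightAction {F Δ k : Type} [Field F] [DivisionRing Δ] [Algebra F Δ] [Field k]
    [Algebra F k] (j : k →ₐ[F] Δ) : k ⊗[F] Δ →ₐ[F] Module.End F Δ :=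
  Algebra.TensorProduct.lift
    (AlgHom.ofLinearMap ((LinearMap.mul F Δ).flip ∘ₗ j.toLinearMap)
      (by ext; simp) (fun a b ↦ by rw [mul_comm a b]; ext; simp [mul_assoc]))
    (Algebra.lmul F Δ)
    (fun a b ↦ by ext; simp [mul_assoc])

theorem leftRightAction_tmul {F Δ k : Type} [Field F] [DivisionRing Δ] [Algebra F Δ] [Field k]
    [Algebra F k] (j : k →ₐ[F] Δ) (a : k) (d z : Δ) :
    leftRightAction j (a ⊗ₜ d) z = d * z * j a := by
  refine (congrArg (fun f : Module.End F Δ ↦ f z)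
    (Algebra.TensorProduct.lift_tmul _ _ _ a d)).trans ?_
  simp [mul_assoc]

theorem leftRightAction_transitive {F Δ k : Type} [Field F] [DivisionRing Δ] [Algebra F Δ]
    [Field k] [Algebra F k] (j : k →ₐ[F] Δ) (z : Δ) (hz : z ≠ 0) (z' : Δ) :
    ∃ r, leftRightAction j r z = z' :=
  ⟨1 ⊗ₜ (z' * z⁻¹), by simp [leftRightAction_tmul, hz]⟩

/-- A case of the Skolem–Noether theorem: an isomorphism between the two simple
`k ⊗ Δ`-modules attached to `i` and `j` is left `Δ`-linear, hence right multiplication by a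
nonzero `u`, and its `k`-linearity says that `u` intertwines `i` and `j`. -/
theorem exists_conj_of_algHom {F Δ k : Type} [Field F] [DivisionRing Δ] [Algebra F Δ]
    [FiniteDimensional F Δ] [Algebra.IsCentral F Δ] [Field k] [Algebra F k] (i j : k →ₐ[F] Δ) :
    ∃ u : Δ, u ≠ 0 ∧ ∀ a, i a * u = u * j a := by
  have := isSimpleRing_tensorProduct F Δ k
  have : IsArtinianRing (k ⊗[F] Δ) := IsArtinianRing.of_finite k _
  obtain ⟨e, he⟩ := exists_linearEquiv_of_transitive (leftRightAction i) (leftRightAction j)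
    (leftRightAction_transitive i) (leftRightAction_transitive j)
  refine ⟨e 1, by simp, fun a ↦ ?_⟩
  -- `i a` is both the result of `1 ⊗ i a` and of `a ⊗ 1` acting on `1`.
  have h1 := he (1 ⊗ₜ i a) 1
  have h2 := he (a ⊗ₜ 1) 1
  simp only [leftRightAction_tmul, map_one, mul_one, one_mul] at h1 h2
  rw [← h1, h2]

/-- The action of `A` on `Dᶜ` through an isomorphism of `k`-algebras `A ≃ Mat_c(D)`, regarded as
linear over a subfield `F` of `k`. -/
noncomputable def matrixAction {F k A D : Type} [Field F] [Field k] [Algebra F k] [Ring A]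
    [Algebra k A] [Algebra F A] [IsScalarTower F k A] [DivisionRing D] [Algebra k D]
    [Algebra F D] [IsScalarTower F k D] {c : ℕ} (φ : A ≃ₐ[k] Matrix (Fin c) (Fin c) D) :
    A →ₐ[F] Module.End F (Fin c → D) :=
  (Algebra.lsmul F F (Fin c → D)).comp (φ.restrictScalars F).toAlgHom

theorem matrixAction_apply {F k A D : Type} [Field F] [Field k] [Algebra F k] [Ring A]
    [Algebra k A] [Algebra F A] [IsScalarTower F k A] [DivisionRing D] [Algebra k D]
    [Algebra F D] [IsScalarTower F k D] {c : ℕ} (φ : A ≃ₐ[k] Matrix (Fin c) (Fin c) D) (r : A)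
    (v : Fin c → D) : matrixAction (F := F) φ r v = (φ r).mulVec v := rfl

theorem matrixAction_transitive {F k A D : Type} [Field F] [Field k] [Algebra F k] [Ring A]
    [Algebra k A] [Algebra F A] [IsScalarTower F k A] [DivisionRing D] [Algebra k D]
    [Algebra F D] [IsScalarTower F k D] {c : ℕ} (φ : A ≃ₐ[k] Matrix (Fin c) (Fin c) D)
    (v : Fin c → D) (hv : v ≠ 0) (w : Fin c → D) : ∃ r, matrixAction (F := F) φ r v = w := by
  obtain ⟨i, hi⟩ := Function.ne_iff.1 hv
  refine ⟨φ.symm (Matrix.of fun l m ↦ if m = i then w l * (v i)⁻¹ else 0), ?_⟩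
  have hi : v i ≠ 0 := hi
  ext l
  simp [matrixAction_apply, Matrix.mulVec, dotProduct, hi]

/-- Counting dimensions over `k` in `k ⊗ Δ ≅ Mat_c(D)` gives `deg Δ = c · deg D`. -/
theorem mul_eq_deg {F Δ k D : Type} [Field F] [DivisionRing Δ] [Algebra F Δ] [Field k]
    [Algebra F k] [DivisionRing D] [Algebra k D] {degΔ c dp : ℕ}
    (hdeg : degΔ * degΔ = Module.finrank F Δ) (hdp : dp * dp = Module.finrank k D)
    (φ : (k ⊗[F] Δ) ≃ₐ[k] Matrix (Fin c) (Fin c) D) : c * dp = degΔ := by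
  have h := φ.toLinearEquiv.finrank_eq
  rw [Module.finrank_baseChange, Module.finrank_matrix, ← hdeg, ← hdp] at h
  simp only [Fintype.card_fin] at h
  exact Nat.mul_self_inj.1 (by rw [h]; ring)

theorem finrank_pi_tower {F k D : Type} [Field F] [Field k] [Algebra F k] [FiniteDimensional F k]
    [DivisionRing D] [Algebra k D] [Algebra F D] [IsScalarTower F k D] (c dp : ℕ)
    (hpos : 0 < dp) (hdp : dp * dp = Module.finrank k D) :
    Module.finrank F (Fin c → D) = c * (Module.finrank F k * (dp * dp)) := by
  have : FiniteDimensional k D := .of_finrank_pos (hdp ▸ Nat.mul_pos hpos hpos)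
  have : FiniteDimensional F D := Module.Finite.trans k D
  rw [hdp, Module.finrank_mul_finrank, Module.finrank_pi_fintype]
  simp

/-- If `k` embeds in `Δ`, the matrix size `c` in `k ⊗ Δ ≅ Mat_c(D)` is `[k : F]`: both `Δ` and
`Dᶜ` are simple `k ⊗ Δ`-modules, so they have the same dimension over `F`. -/
theorem finrank_mul_eq_deg_of_algHom {F Δ k D : Type} [Field F] [DivisionRing Δ] [Algebra F Δ]
    [FiniteDimensional F Δ] [Algebra.IsCentral F Δ] [Field k] [Algebra F k]
    [FiniteDimensional F k] [DivisionRing D] [Algebra k D] {degΔ c dp : ℕ}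
    (hdeg : degΔ * degΔ = Module.finrank F Δ) (hdp : dp * dp = Module.finrank k D)
    (φ : (k ⊗[F] Δ) ≃ₐ[k] Matrix (Fin c) (Fin c) D) (j : k →ₐ[F] Δ) :
    Module.finrank F k * dp = degΔ := by
  -- `D` carries no `F`-structure a priori; it gets the one restricted from `k`.
  let : Algebra F D := Algebra.compHom D (algebraMap F k)
  have : IsScalarTower F k D := .of_algebraMap_eq fun _ ↦ rfl
  have := isSimpleRing_tensorProduct F Δ k
  have : IsArtinianRing (k ⊗[F] Δ) := IsArtinianRing.of_finite k _
  have hc := mul_eq_deg hdeg hdp φ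
  have hpos : 0 < degΔ * degΔ := hdeg ▸ Module.finrank_pos
  have hpos : 0 < c * dp := by rw [hc]; exact Nat.pos_of_mul_pos_left hpos
  have hcpos : 0 < c := Nat.pos_of_mul_pos_right hpos
  have hdpos : 0 < dp := Nat.pos_of_mul_pos_left hpos
  have : NeZero c := ⟨hcpos.ne'⟩
  obtain ⟨e, -⟩ := exists_linearEquiv_of_transitive (leftRightAction j) (matrixAction (F := F) φ)
    (leftRightAction_transitive j) (matrixAction_transitive φ)
  have h := e.finrank_eq
  rw [← hdeg, finrank_pi_tower c dp hdpos hdp, ← hc] at h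
  have : c = Module.finrank F k :=
    Nat.eq_of_mul_eq_mul_right (Nat.mul_pos hcpos (Nat.mul_pos hdpos hdpos)) (by linarith)
  rw [← this, hc]

/-- If the matrix size in `k ⊗ Δ ≅ Mat_c(D)` is `[k : F]`, then `Dᶜ` has the dimension of `Δ`,
so it is one-dimensional over `Δ`; hence scalars from `k`, which commute with `Δ`, act on a
generator as elements of `Δ`. -/
theorem exists_aeval_eq_zero {F Δ k D : Type} [Field F] [DivisionRing Δ] [Algebra F Δ]
    [FiniteDimensional F Δ] [Field k] [Algebra F k]
    [FiniteDimensional F k] [DivisionRing D] [Algebra k D] {degΔ c dp : ℕ}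
    (hdeg : degΔ * degΔ = Module.finrank F Δ) (hdp : dp * dp = Module.finrank k D)
    (φ : (k ⊗[F] Δ) ≃ₐ[k] Matrix (Fin c) (Fin c) D) (h : Module.finrank F k * dp = degΔ)
    (θ : k) : ∃ d : Δ, ∀ q : F[X], aeval θ q = 0 → aeval d q = 0 := by
  let : Algebra F D := Algebra.compHom D (algebraMap F k)
  have : IsScalarTower F k D := .of_algebraMap_eq fun _ ↦ rfl
  have hc := mul_eq_deg hdeg hdp φ
  have hpos : 0 < degΔ * degΔ := hdeg ▸ Module.finrank_pos
  have hpos : 0 < c * dp := by rw [hc]; exact Nat.pos_of_mul_pos_left hpos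
  have hcpos : 0 < c := Nat.pos_of_mul_pos_right hpos
  have hdpos : 0 < dp := Nat.pos_of_mul_pos_left hpos
  have hck : Module.finrank F k = c := Nat.eq_of_mul_eq_mul_right hdpos (h.trans hc.symm)
  have : NeZero c := ⟨hcpos.ne'⟩
  have hfin : Module.finrank F Δ = Module.finrank F (Fin c → D) := by
    rw [← hdeg, finrank_pi_tower c dp hdpos hdp, hck, ← hc]; ring
  have : FiniteDimensional F (Fin c → D) :=
    .of_finrank_pos (hfin ▸ Module.finrank_pos)
  obtain ⟨v, hv⟩ := exists_ne (0 : Fin c → D)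
  let ψ : Δ →ₐ[F] Module.End F (Fin c → D) :=
    (matrixAction φ).comp Algebra.TensorProduct.includeRight
  let κ : k →ₐ[F] Module.End F (Fin c → D) :=
    (matrixAction φ).comp Algebra.TensorProduct.includeLeft
  have hcomm (a : k) (d : Δ) (w) : κ a (ψ d w) = ψ d (κ a w) := by
    simp only [κ, ψ, AlgHom.comp_apply, ← Module.End.mul_apply, ← map_mul]
    simp
  have hinj (d : Δ) (hd : ψ d v = 0) : d = 0 := by
    by_contra hd0
    refine hv ?_
    have : ψ (d⁻¹ * d) v = 0 := by rw [map_mul, Module.End.mul_apply, hd, map_zero]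
    simpa [hd0] using this
  have hsurj : Function.Surjective (LinearMap.applyₗ v ∘ₗ ψ.toLinearMap) :=
    (LinearMap.injective_iff_surjective_of_finrank_eq_finrank hfin).1
      ((injective_iff_map_eq_zero _).2 hinj)
  obtain ⟨d, hd⟩ := hsurj (κ θ v)
  have hd : ψ d v = κ θ v := hd
  have hpow (n : ℕ) : ψ (d ^ n) v = κ (θ ^ n) v := by
    induction n with
    | zero => simp
    | succ n ih =>
      rw [pow_succ, map_mul, Module.End.mul_apply, hd, ← hcomm, ih, pow_succ', map_mul,
        Module.End.mul_apply]
  have hpoly (q : F[X]) : ψ (aeval d q) v = κ (aeval θ q) v := by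
    induction q using Polynomial.induction_on' with
    | add p q hp hq => simp only [map_add, LinearMap.add_apply, hp, hq]
    | monomial n a =>
      simp only [aeval_monomial, map_mul, Module.End.mul_apply, hpow, AlgHom.commutes]
  exact ⟨d, fun q hq ↦ hinj _ (by rw [hpoly, hq]; simp)⟩

/-- Evaluation at a root in a noncommutative `Δ`, where `AdjoinRoot.liftAlgHom` is unavailable
because it needs a commutative target. -/
theorem exists_algHom_adjoinRoot {F Δ : Type} [Field F] [DivisionRing Δ] [Algebra F Δ] {p : F[X]}
    {x : Δ} (hx : aeval x p = 0) : ∃ j : AdjoinRoot p →ₐ[F] Δ, j (AdjoinRoot.root p) = x := by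
  refine ⟨Ideal.Quotient.liftₐ (Ideal.span {p}) (aeval x) fun q hq ↦ ?_, aeval_X x⟩
  obtain ⟨r, rfl⟩ := Ideal.mem_span_singleton'.1 hq
  rw [map_mul, hx, mul_zero]

/-- Separable conjugacy classes of `Δˣ` for a finite-dimensional central division
`F`-algebra `Δ` of degree `degΔ`: the map sending (the conjugacy class of) `x ∈ Δˣ` to the
minimal polynomial of `x` is a bijection from the set of conjugacy classes of `Δˣ` with
separable minimal polynomial onto the set of monic irreducible separable polynomials
`p ≠ t` such that `deg p · deg(Δ_p) = deg Δ`, where `Δ_p` is the division part of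
`Δ ⊗_F k(p)` over `k(p) := F[t]/(p)`. -/
theorem divisionAlgebra_sep_conjClasses_bijection
    (F Δ : Type) [Field F] [DivisionRing Δ] [Algebra F Δ]
    [FiniteDimensional F Δ] [Algebra.IsCentral F Δ]
    (degΔ : ℕ) (hdeg : degΔ * degΔ = Module.finrank F Δ) :
    -- the minimal polynomial is a complete invariant of separable conjugacy classes
    (∀ x y : Δˣ, (minpoly F (x : Δ)).Separable → (minpoly F (y : Δ)).Separable →
      (IsConj x y ↔ minpoly F (x : Δ) = minpoly F (y : Δ))) ∧
    -- the invariant lands in the asserted set of polynomials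
    (∀ x : Δˣ, (minpoly F (x : Δ)).Separable →
      (minpoly F (x : Δ)).Monic ∧ Irreducible (minpoly F (x : Δ)) ∧
      minpoly F (x : Δ) ≠ X ∧
      DegMulDegDivisionPartEq F Δ (minpoly F (x : Δ)) degΔ) ∧
    -- every polynomial in the asserted set arises as such a minimal polynomial
    (∀ p : Polynomial F, p.Monic → Irreducible p → p.Separable → p ≠ X →
      DegMulDegDivisionPartEq F Δ p degΔ →
      ∃ x : Δˣ, minpoly F (x : Δ) = p) := by
  have hint (x : Δ) : IsIntegral F x := Algebra.IsIntegral.isIntegral x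
  have hirr (x : Δ) : Irreducible (minpoly F x) := minpoly.irreducible (hint x)
  have hfin (p : F[X]) (hp : p.Monic) : FiniteDimensional F (AdjoinRoot p) := hp.finite_adjoinRoot
  have hrank (p : F[X]) (hp : p ≠ 0) : Module.finrank F (AdjoinRoot p) = p.natDegree :=
    (AdjoinRoot.powerBasis hp).finrank
  refine ⟨fun x y _ _ ↦ ⟨fun h ↦ ?_, fun h ↦ ?_⟩, fun x _ ↦ ⟨minpoly.monic (hint x), hirr x,
    fun h ↦ ?_, ?_⟩, fun p hmon hp _ hX h ↦ ?_⟩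
  · obtain ⟨u, rfl⟩ := isConj_iff.1 h
    have key (q : F[X]) : aeval ((u * x * u⁻¹ : Δˣ) : Δ) q = u * aeval (x : Δ) q * (u⁻¹ : Δˣ) := by
      induction q using Polynomial.induction_on' with
      | add p q hp hq => rw [map_add, map_add, hp, hq, mul_add, add_mul]
      | monomial n a =>
        rw [aeval_monomial, aeval_monomial, ← Units.val_pow_eq_pow_val, conj_pow, Units.val_mul,
          Units.val_mul, Units.val_pow_eq_pow_val, ← mul_assoc, ← mul_assoc, ← mul_assoc,
          Algebra.commutes]
    refine minpoly.eq_of_irreducible_of_monic (hirr x) ?_ (minpoly.monic (hint x))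
    rw [key, minpoly.aeval]; simp
  · have : Fact (Irreducible (minpoly F (x : Δ))) := ⟨hirr x⟩
    obtain ⟨i, hi⟩ := exists_algHom_adjoinRoot (minpoly.aeval F (x : Δ))
    obtain ⟨j, hj⟩ : ∃ j : AdjoinRoot (minpoly F (x : Δ)) →ₐ[F] Δ, j (AdjoinRoot.root _) = y :=
      exists_algHom_adjoinRoot (by rw [h, minpoly.aeval])
    obtain ⟨u, hu, h⟩ := exists_conj_of_algHom i j
    refine IsConj.symm (isConj_iff.2 ⟨Units.mk0 u hu, ?_⟩)
    rw [mul_inv_eq_iff_eq_mul, Units.ext_iff]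
    simpa [hi, hj] using (h (AdjoinRoot.root _)).symm
  · have := minpoly.aeval F (x : Δ)
    rw [h, aeval_X] at this
    exact x.ne_zero this
  · rintro c dp D _ _ ⟨φ⟩ hdp
    have : Fact (Irreducible (minpoly F (x : Δ))) := ⟨hirr x⟩
    have := hfin _ (minpoly.monic (hint x))
    obtain ⟨i, -⟩ := exists_algHom_adjoinRoot (minpoly.aeval F (x : Δ))
    rw [← hrank _ (hirr x).ne_zero]
    exact finrank_mul_eq_deg_of_algHom hdeg hdp φ i
  · have : Fact (Irreducible p) := ⟨hp⟩
    have := hfin _ hmon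
    have := isSimpleRing_tensorProduct F Δ (AdjoinRoot p)
    have : IsArtinianRing (AdjoinRoot p ⊗[F] Δ) := IsArtinianRing.of_finite (AdjoinRoot p) _
    obtain ⟨c, hc, D, _, _, _, ⟨φ⟩⟩ :=
      IsSimpleRing.exists_algEquiv_matrix_divisionRing_finite (AdjoinRoot p) (AdjoinRoot p ⊗[F] Δ)
    -- The dimension of `D` is a square because `c² [D : k(p)] = (deg Δ)²`.
    have hsq := φ.toLinearEquiv.finrank_eq
    rw [Module.finrank_baseChange, Module.finrank_matrix, ← hdeg] at hsq
    simp only [Fintype.card_fin] at hsq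
    obtain ⟨dp, rfl⟩ : c ∣ degΔ := by
      rw [← Nat.pow_dvd_pow_iff two_ne_zero, sq, sq, hsq]
      exact Dvd.intro _ rfl
    have hdp : dp * dp = Module.finrank (AdjoinRoot p) D :=
      Nat.eq_of_mul_eq_mul_left (Nat.mul_pos (Nat.pos_of_neZero c) (Nat.pos_of_neZero c))
        (by rw [← hsq]; ring)
    have hpd := h c dp D ⟨φ⟩ hdp
    rw [← hrank _ hp.ne_zero] at hpd
    obtain ⟨d, hd⟩ := exists_aeval_eq_zero hdeg hdp φ hpd (AdjoinRoot.root p)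
    have hdp := minpoly.eq_of_irreducible_of_monic hp (hd p (by simp [AdjoinRoot.aeval_eq])) hmon
    refine ⟨Units.mk0 d ?_, hdp.symm⟩
    rintro rfl
    exact hX (by rw [hdp, minpoly.zero])
end
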